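/- Let n ≥ 1, m ≥ 1, L ≥ μ > 0, κ := L/μ, λ ∈ [0,1), and let H_α be the 4×4 real matrix with rows [ (1+λ²)/2, 0, 0, 2λ²α²L²/(1−λ²) ], [ αL, 1 − μα, α²L²/n, 0 ], [ 8mα²L² + 9/(4m), 16mα²L², 1 − 1/(4m), 0 ], [ 31/(1−λ²), 64λ²α²L²/(1−λ²), 97/8, (1+λ²)/2 ]. If 0 < α ≤ ᾱ₂ := min{ (1−λ²)²/(55λL), (1−λ²)/(13λκ^{1/4}L), (1−λ²)³/(388λ²nL), n^{1/3}/(10.5·m^{2/3}κ^{1/3}L), 1/(36L), (1−λ²)/(2μ), 1/(4mμ) } (terms with λ in the denominator interpreted as +∞ when λ = 0), then the spectral radius of H_α satisfies ρ(H_α) ≤ 1 − μα/2. -/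

import Mathlib

open MeasureTheory ProbabilityTheory Finset Filter
open scoped ENNReal RealInnerProductSpace

noncomputable section

/-- The second largest singular value of a doubly stochastic matrix `w`, realized as the
operator norm of `w - (1/n) 𝟙ₙ 𝟙ₙᵀ` acting on `EuclideanSpace ℝ (Fin n)`. -/
def secondSV {n : ℕ} (w : Matrix (Fin n) (Fin n) ℝ) : ℝ :=
  ‖LinearMap.toContinuousLinearMap
      (Matrix.toEuclideanLin (w - Matrix.of fun _ _ => (n : ℝ)⁻¹))‖

/-- The average `(1/n) ∑ᵢ vᵢ` of the blocks of a stacked vector `v ∈ ℝ^{np}`. -/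
def blockAvg {n p : ℕ} (v : Fin n → EuclideanSpace ℝ (Fin p)) : EuclideanSpace ℝ (Fin p) :=
  (n : ℝ)⁻¹ • ∑ i, v i

/-- `‖v - J v‖²` for a stacked vector `v ∈ ℝ^{np}`, where `J = ((1/n) 𝟙ₙ 𝟙ₙᵀ) ⊗ Iₚ`. -/
def consSq {n p : ℕ} (v : Fin n → EuclideanSpace ℝ (Fin p)) : ℝ :=
  ∑ i, ‖v i - blockAvg v‖ ^ 2

/-- `(W - J) v`, blockwise, where `W = w ⊗ Iₚ` and `J = ((1/n) 𝟙ₙ 𝟙ₙᵀ) ⊗ Iₚ`. -/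
def WJapp {n p : ℕ} (w : Matrix (Fin n) (Fin n) ℝ) (v : Fin n → EuclideanSpace ℝ (Fin p)) :
    Fin n → EuclideanSpace ℝ (Fin p) :=
  fun i => (∑ r, w i r • v r) - blockAvg v

/-- The local batch function `fᵢ := (1/m) ∑ⱼ f_{i,j}`. -/
def floc {n m p : ℕ} (f : Fin n → Fin m → EuclideanSpace ℝ (Fin p) → ℝ) (i : Fin n) :
    EuclideanSpace ℝ (Fin p) → ℝ :=
  fun u => (m : ℝ)⁻¹ * ∑ j, f i j u

/-- The global function `F := (1/n) ∑ᵢ fᵢ`. -/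
def fglob {n m p : ℕ} (f : Fin n → Fin m → EuclideanSpace ℝ (Fin p) → ℝ) :
    EuclideanSpace ℝ (Fin p) → ℝ :=
  fun u => (n : ℝ)⁻¹ * ∑ i, floc f i u

/-- `F* := inf_x F(x)`. -/
def Fstar {n m p : ℕ} (f : Fin n → Fin m → EuclideanSpace ℝ (Fin p) → ℝ) : ℝ :=
  ⨅ u, fglob f u

/-- `∇f̄(x) := (1/n) ∑ᵢ ∇fᵢ(xᵢ)`. -/
def gradfbar {n m p : ℕ} (f : Fin n → Fin m → EuclideanSpace ℝ (Fin p) → ℝ)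
    (v : Fin n → EuclideanSpace ℝ (Fin p)) : EuclideanSpace ℝ (Fin p) :=
  (n : ℝ)⁻¹ • ∑ i, gradient (floc f i) (v i)

/-- The auxiliary quantity `t := (1/n) ∑ᵢ (1/m) ∑ⱼ ‖x̄ - z_{i,j}‖²`. -/
def tAux {n m p : ℕ} (xbar : EuclideanSpace ℝ (Fin p))
    (z : Fin n → Fin m → EuclideanSpace ℝ (Fin p)) : ℝ :=
  (n : ℝ)⁻¹ * ∑ i, (m : ℝ)⁻¹ * ∑ j, ‖xbar - z i j‖ ^ 2

/-- The filtration `F^k := σ(τᵢᵗ, sᵢᵗ : i ∈ V, t ≤ k-1)`, with `F⁰` trivial. -/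
def gtFilt {Ω : Type*} {n m : ℕ} (τ s : Fin n → ℕ → Ω → Fin m) (k : ℕ) :
    MeasurableSpace Ω :=
  ⨆ (i : Fin n) (t : ℕ) (_ : t < k),
    MeasurableSpace.comap (τ i t) ⊤ ⊔ MeasurableSpace.comap (s i t) ⊤

/-- A Collatz–Wielandt bound: a positive vector `s` with `X s ≤ β s` bounds the modulus of every
complex eigenvalue of the nonnegative matrix `X` by `β`. -/
theorem norm_le_of_mem_spectrum_of_mulVec_le {ι : Type*} [Fintype ι] [DecidableEq ι]
    {X : Matrix ι ι ℝ} (hX : ∀ i j, 0 ≤ X i j) {s : ι → ℝ} (hs : ∀ i, 0 < s i) {β : ℝ}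
    (hle : ∀ i, ∑ j, X i j * s j ≤ β * s i) {c : ℂ}
    (hc : c ∈ spectrum ℂ (X.map (algebraMap ℝ ℂ))) : ‖c‖ ≤ β := by
  rw [← Matrix.spectrum_toLin', ← Module.End.hasEigenvalue_iff_mem_spectrum] at hc
  obtain ⟨v, hv⟩ := hc.exists_hasEigenvector
  have hv0 : v ≠ 0 := hv.2
  have hcv := hv.apply_eq_smul
  rw [Matrix.toLin'_apply] at hcv
  obtain ⟨k, hk⟩ := Function.ne_iff.mp hv0
  obtain ⟨i, -, hi⟩ := Finset.exists_max_image univ (fun j => ‖v j‖ / s j) ⟨k, mem_univ k⟩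
  have hvk : 0 < ‖v k‖ / s k := div_pos (norm_pos_iff.mpr hk) (hs k)
  have hr : 0 < ‖v i‖ / s i := hvk.trans_le (hi k (mem_univ k))
  have hbound (j : ι) : ‖v j‖ ≤ ‖v i‖ / s i * s j :=
    (div_le_iff₀ (hs j)).mp (hi j (mem_univ j))
  have hvi : ‖v i‖ = ‖v i‖ / s i * s i := (div_mul_cancel₀ _ (hs i).ne').symm
  have key : ‖c‖ * ‖v i‖ ≤ β * ‖v i‖ :=
    calc ‖c‖ * ‖v i‖ = ‖∑ j, (X i j : ℂ) * v j‖ := by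
          rw [← norm_mul, ← smul_eq_mul, ← Pi.smul_apply, ← hcv]
          rfl
      _ ≤ ∑ j, X i j * ‖v j‖ := by
          refine (norm_sum_le _ _).trans_eq (Finset.sum_congr rfl fun j _ => ?_)
          rw [norm_mul, Complex.norm_real, Real.norm_of_nonneg (hX i j)]
      _ ≤ ∑ j, X i j * (‖v i‖ / s i * s j) := by
          gcongr with j
          · exact hX i j
          · exact hbound j
      _ = ‖v i‖ / s i * ∑ j, X i j * s j := by
          rw [Finset.mul_sum]
          exact Finset.sum_congr rfl fun j _ => by ring
      _ ≤ ‖v i‖ / s i * (β * s i) := by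
          gcongr
          exact hle i
      _ = β * ‖v i‖ := by
          rw [mul_left_comm, ← hvi]
  refine le_of_mul_le_mul_right key ?_
  rw [hvi]
  exact mul_pos hr (hs i)

/-- The step-size bounds keep `α L` below a sixth of `1 - λ²`. -/
theorem six_mul_le_one_sub_sq {lam a : ℝ} (hlam1 : lam < 1) (hlam0 : 0 ≤ lam) (ha : 0 < a)
    (h1 : 55 * lam * a ≤ (1 - lam ^ 2) ^ 2) (h5 : 36 * a ≤ 1) : 6 * a ≤ 1 - lam ^ 2 := by
  rcases le_or_gt lam (1 / 2) with h | h
  · nlinarith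
  · have hν0 : 0 ≤ 1 - lam ^ 2 := by nlinarith
    have hν : (1 - lam ^ 2) ^ 2 ≤ 1 - lam ^ 2 := by nlinarith [sq_nonneg lam]
    have := mul_pos ha (sub_pos.mpr h)
    nlinarith

/-- The first row of `H s ≤ (1 - μα/2) s`, with `a = α L`, `q = μ / L`, `ν = 1 - λ²`. -/
theorem row_one_le {n lam a q ν : ℝ} (hν : 0 < ν) (ha : 0 < a) (hq : 0 < q)
    (hq1 : q ≤ 1) (h6 : 6 * a ≤ ν) (hlam0 : 0 ≤ lam)
    (h1 : 55 * lam * a ≤ ν ^ 2) (h2 : 28561 * lam ^ 4 * a ^ 4 ≤ ν ^ 4 * q)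
    (h3 : 388 * lam ^ 2 * n * a ≤ ν ^ 3) :
    2 * lam ^ 2 * a ^ 2 / ν * (31 * q / ν ^ 2 + 256 * lam ^ 2 * a ^ 2 / ν ^ 2
      + 97 * n * q / (8 * ν * a)) ≤ (ν / 2 - q * a / 2) * (q / 4) := by
  have hqa : q * a ≤ ν / 6 := by nlinarith
  have h1' : 3025 * (lam ^ 2 * a ^ 2) ≤ ν ^ 4 := by
    have := pow_le_pow_left₀ (by positivity) h1 2
    nlinarith
  have e1 : lam ^ 2 * a ^ 2 * q / ν ^ 3 ≤ q * ν / 3025 := by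
    rw [div_le_iff₀ (by positivity)]
    nlinarith
  have e2 : lam ^ 4 * a ^ 4 / ν ^ 3 ≤ q * ν / 28561 := by
    rw [div_le_iff₀ (by positivity)]
    nlinarith
  have e3 : lam ^ 2 * n * a * q / ν ^ 2 ≤ q * ν / 388 := by
    rw [div_le_iff₀ (by positivity)]
    nlinarith
  have hexp : 2 * lam ^ 2 * a ^ 2 / ν * (31 * q / ν ^ 2 + 256 * lam ^ 2 * a ^ 2 / ν ^ 2
      + 97 * n * q / (8 * ν * a)) = 62 * (lam ^ 2 * a ^ 2 * q / ν ^ 3)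
      + 512 * (lam ^ 4 * a ^ 4 / ν ^ 3) + 97 / 4 * (lam ^ 2 * n * a * q / ν ^ 2) := by
    field_simp
    ring
  rw [hexp]
  nlinarith [mul_pos hq hν]

/-- The third row of `H s ≤ (1 - μα/2) s`, with `a = α L`, `q = μ / L`. -/
theorem row_three_le {n m a q : ℝ} (hn : 1 ≤ n) (hm : 1 ≤ m) (ha : 0 < a) (hq : 0 < q)
    (hq1 : q ≤ 1) (h4 : 10.5 ^ 3 * m ^ 2 * a ^ 3 ≤ n * q) (h5 : 36 * a ≤ 1)
    (h7 : 4 * m * (q * a) ≤ 1) :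
    (8 * m * a ^ 2 + 9 / (4 * m)) * (q / 4) + 16 * m * a ^ 2
      ≤ (1 / (4 * m) - q * a / 2) * (n * q / (4 * a)) := by
  have hm0 : 0 < m := by linarith
  have hc : 1 / (8 * m) ≤ 1 / (4 * m) - q * a / 2 := by
    have : q * a ≤ 1 / (4 * m) := by
      rw [le_div_iff₀ (by positivity)]
      linarith
    have e : 1 / (8 * m) = 1 / (4 * m) / 2 := by
      field_simp
      norm_num
    linarith
  refine le_trans ?_ (mul_le_mul_of_nonneg_right hc (by positivity))
  rw [div_mul_div_comm, le_div_iff₀ (by positivity)]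
  have hexp : ((8 * m * a ^ 2 + 9 / (4 * m)) * (q / 4) + 16 * m * a ^ 2) * (8 * m * (4 * a))
      = 64 * (m ^ 2 * a ^ 3) * q + 18 * (q * a) + 512 * (m ^ 2 * a ^ 3) := by
    field_simp
    ring
  rw [hexp]
  have hy : 0 < m ^ 2 * a ^ 3 := by positivity
  have hnq : q ≤ n * q := le_mul_of_one_le_left hq.le hn
  have hyq : m ^ 2 * a ^ 3 * q ≤ m ^ 2 * a ^ 3 := mul_le_of_le_one_right hy.le hq1
  have haq : 36 * (q * a) ≤ q := by nlinarith
  norm_num at h4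
  linarith

/-- The fourth row of `H s ≤ (1 - μα/2) s`, with `a = α L`, `q = μ / L`, `ν = 1 - λ²`. -/
theorem row_four_le {n lam a q ν : ℝ} (hn : 0 < n) (hν : 0 < ν) (ha : 0 < a) (hq : 0 < q)
    (hqa : q * a ≤ ν / 2) :
    31 / ν * (q / 4) + 64 * lam ^ 2 * a ^ 2 / ν + 97 / 8 * (n * q / (4 * a))
      ≤ (ν / 2 - q * a / 2) * (31 * q / ν ^ 2 + 256 * lam ^ 2 * a ^ 2 / ν ^ 2
        + 97 * n * q / (8 * ν * a)) := by
  have hc : ν / 4 ≤ ν / 2 - q * a / 2 := by linarith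
  refine le_trans (le_of_eq ?_) (mul_le_mul_of_nonneg_right hc (by positivity))
  field_simp
  ring

/-- The step-size condition with cube roots, cleared of roots and denominators. -/
theorem cube_bound_of_le_div {n m κ L α : ℝ} (hn : 0 ≤ n) (hm : 0 < m) (hκ : 0 < κ) (hL : 0 < L)
    (hα : 0 ≤ α) (h : α ≤ n ^ ((1 : ℝ) / 3)
      / (10.5 * m ^ ((2 : ℝ) / 3) * κ ^ ((1 : ℝ) / 3) * L)) :
    10.5 ^ 3 * m ^ 2 * (α * L) ^ 3 * κ ≤ n := by
  rw [le_div_iff₀ (by positivity)] at h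
  have h' := pow_le_pow_left₀ (by positivity) h 3
  have en : (n ^ ((1 : ℝ) / 3)) ^ 3 = n := by
    rw [← Real.rpow_mul_natCast hn]
    norm_num
  have em : (m ^ ((2 : ℝ) / 3)) ^ 3 = m ^ 2 := by
    rw [← Real.rpow_mul_natCast hm.le]
    norm_num
  have ek : (κ ^ ((1 : ℝ) / 3)) ^ 3 = κ := by
    rw [← Real.rpow_mul_natCast hκ.le]
    norm_num
  calc 10.5 ^ 3 * m ^ 2 * (α * L) ^ 3 * κ
      = (α * (10.5 * m ^ ((2 : ℝ) / 3) * κ ^ ((1 : ℝ) / 3) * L)) ^ 3 := by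
        simp only [mul_pow, em, ek]
        ring
    _ ≤ n := h'.trans_eq en

/-- The step-size condition with a fourth root, cleared of roots and denominators. -/
theorem fourth_bound_of_le_div {ν lam κ L α : ℝ} (hlam : 0 < lam) (hκ : 0 < κ)
    (hL : 0 < L) (hα : 0 ≤ α) (h : α ≤ ν / (13 * lam * κ ^ ((1 : ℝ) / 4) * L)) :
    28561 * lam ^ 4 * (α * L) ^ 4 * κ ≤ ν ^ 4 := by
  rw [le_div_iff₀ (by positivity)] at h
  have ek : (κ ^ ((1 : ℝ) / 4)) ^ 4 = κ := by
    rw [← Real.rpow_mul_natCast hκ.le]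
    norm_num
  calc 28561 * lam ^ 4 * (α * L) ^ 4 * κ
      = (α * (13 * lam * κ ^ ((1 : ℝ) / 4) * L)) ^ 4 := by
        simp only [mul_pow, ek]
        ring
    _ ≤ ν ^ 4 := pow_le_pow_left₀ (by positivity) h 4

/-- Spectral radius of the GT-SAGA LTI matrix `H_α` under the PL condition. -/
theorem gtsaga_H_spectral_radius_bound
    (n m : ℕ) (hn : 1 ≤ n) (hm : 1 ≤ m) (L mu lam α : ℝ)
    (hmu : 0 < mu) (hmuL : mu ≤ L) (hlam0 : 0 ≤ lam) (hlam1 : lam < 1) (hα0 : 0 < α)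
    (hα1 : lam ≠ 0 → α ≤ (1 - lam ^ 2) ^ 2 / (55 * lam * L))
    (hα2 : lam ≠ 0 → α ≤ (1 - lam ^ 2) / (13 * lam * (L / mu) ^ ((1 : ℝ) / 4) * L))
    (hα3 : lam ≠ 0 → α ≤ (1 - lam ^ 2) ^ 3 / (388 * lam ^ 2 * n * L))
    (hα4 : α ≤ (n : ℝ) ^ ((1 : ℝ) / 3)
      / (10.5 * (m : ℝ) ^ ((2 : ℝ) / 3) * (L / mu) ^ ((1 : ℝ) / 3) * L))
    (hα5 : α ≤ 1 / (36 * L))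
    (hα6 : α ≤ (1 - lam ^ 2) / (2 * mu))
    (hα7 : α ≤ 1 / (4 * m * mu)) :
    let H : Matrix (Fin 4) (Fin 4) ℝ :=
      !![(1 + lam ^ 2) / 2, 0, 0, 2 * lam ^ 2 * α ^ 2 * L ^ 2 / (1 - lam ^ 2);
         α * L, 1 - mu * α, α ^ 2 * L ^ 2 / n, 0;
         8 * m * α ^ 2 * L ^ 2 + 9 / (4 * m), 16 * m * α ^ 2 * L ^ 2, 1 - 1 / (4 * m), 0;
         31 / (1 - lam ^ 2), 64 * lam ^ 2 * α ^ 2 * L ^ 2 / (1 - lam ^ 2), 97 / 8,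
           (1 + lam ^ 2) / 2]
    ∀ c ∈ spectrum ℂ (H.map (algebraMap ℝ ℂ)), ‖c‖ ≤ 1 - mu * α / 2 := by
  have hL : 0 < L := hmu.trans_le hmuL
  have hn1 : (1 : ℝ) ≤ n := by exact_mod_cast hn
  have hm1 : (1 : ℝ) ≤ m := by exact_mod_cast hm
  have hn0 : (0 : ℝ) < n := by linarith
  have hm0 : (0 : ℝ) < m := by linarith
  have hν : 0 < 1 - lam ^ 2 := by nlinarith
  have hκ : 0 < L / mu := div_pos hL hmu
  obtain ⟨a, ha_def⟩ : ∃ a, a = α * L := ⟨_, rfl⟩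
  obtain ⟨q, hq_def⟩ : ∃ q, q = mu / L := ⟨_, rfl⟩
  have ha : 0 < a := ha_def ▸ mul_pos hα0 hL
  have hq : 0 < q := hq_def ▸ div_pos hmu hL
  have hq1 : q ≤ 1 := hq_def ▸ (div_le_one hL).mpr hmuL
  have hκq : L / mu = q⁻¹ := by rw [hq_def, inv_div]
  have haa : α ^ 2 * L ^ 2 = a ^ 2 := by rw [ha_def, mul_pow]
  have hqa : mu * α = q * a := by
    rw [hq_def, ha_def]
    field_simp
  have h1 : 55 * lam * a ≤ (1 - lam ^ 2) ^ 2 := by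
    rcases hlam0.eq_or_lt' with h | h
    · simp [h]
    · have := hα1 h.ne'
      rw [le_div_iff₀ (by positivity)] at this
      rw [ha_def]
      linarith
  have h2 : 28561 * lam ^ 4 * a ^ 4 ≤ (1 - lam ^ 2) ^ 4 * q := by
    rcases hlam0.eq_or_lt' with h | h
    · simpa [h] using hq.le
    · have := fourth_bound_of_le_div h hκ hL hα0.le (hα2 h.ne')
      rwa [← ha_def, hκq, ← div_eq_mul_inv, div_le_iff₀ hq] at this
  have h3 : 388 * lam ^ 2 * n * a ≤ (1 - lam ^ 2) ^ 3 := by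
    rcases hlam0.eq_or_lt' with h | h
    · simp [h]
    · have := hα3 h.ne'
      rw [le_div_iff₀ (by positivity)] at this
      rw [ha_def]
      linarith
  have h4 : 10.5 ^ 3 * (m : ℝ) ^ 2 * a ^ 3 ≤ n * q := by
    have := cube_bound_of_le_div hn0.le hm0 hκ hL hα0.le hα4
    rwa [← ha_def, hκq, ← div_eq_mul_inv, div_le_iff₀ hq] at this
  have h5 : 36 * a ≤ 1 := by
    rw [le_div_iff₀ (by positivity)] at hα5
    rw [ha_def]
    linarith
  have h7 : 4 * (m : ℝ) * (q * a) ≤ 1 := by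
    rw [le_div_iff₀ (by positivity)] at hα7
    rw [← hqa]
    linarith
  have h6 := six_mul_le_one_sub_sq hlam1 hlam0 ha h1 h5
  have hqa' : q * a ≤ a := mul_le_of_le_one_left ha.le hq1
  have r1 := row_one_le hν ha hq hq1 h6 hlam0 h1 h2 h3
  have r3 := row_three_le hn1 hm1 ha hq hq1 h4 h5 h7
  have r4 := row_four_le (lam := lam) hn0 hν ha hq (by linarith : q * a ≤ (1 - lam ^ 2) / 2)
  intro H c hc
  have hH : H = !![(1 + lam ^ 2) / 2, 0, 0, 2 * lam ^ 2 * a ^ 2 / (1 - lam ^ 2);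
         a, 1 - q * a, a ^ 2 / n, 0;
         8 * m * a ^ 2 + 9 / (4 * m), 16 * m * a ^ 2, 1 - 1 / (4 * m), 0;
         31 / (1 - lam ^ 2), 64 * lam ^ 2 * a ^ 2 / (1 - lam ^ 2), 97 / 8,
           (1 + lam ^ 2) / 2] := by
    simp only [H, mul_assoc, haa, hqa, ← ha_def]
  have hm4 : 1 / (4 * (m : ℝ)) ≤ 1 := by
    rw [div_le_one (by positivity)]
    linarith
  rw [hqa]
  rw [hH] at hc
  refine norm_le_of_mem_spectrum_of_mulVec_le
    (s := ![q / 4, 1, n * q / (4 * a), 31 * q / (1 - lam ^ 2) ^ 2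
      + 256 * lam ^ 2 * a ^ 2 / (1 - lam ^ 2) ^ 2 + 97 * n * q / (8 * (1 - lam ^ 2) * a)])
    ?_ ?_ ?_ hc
  · have hqa1 : 0 ≤ 1 - q * a := by linarith
    have hm4' : 0 ≤ 1 - 1 / (4 * (m : ℝ)) := by linarith
    intro i j
    fin_cases i <;> fin_cases j <;>
      first | exact hqa1 | exact hm4' | (simp; done) | (simp; positivity)
  · intro i
    fin_cases i <;> simp <;> positivity
  · have e2 : a ^ 2 / n * (n * q / (4 * a)) = q * a / 4 := by
      field_simp
    intro i
    fin_cases i <;> simp only [Fin.sum_univ_four, Matrix.of_apply, Matrix.cons_val]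
      <;> simp only [Fin.zero_eta, Fin.mk_one, Fin.reduceFinMk, Matrix.cons_val]
    · linarith
    · linarith
    · linarith
    · linarith

end
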